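/- arXiv:1104.1843 — 3 statements merged into one kernel-verified Lean document; each statement's English description precedes it below -/
import Mathlib

section
/- Let ρ be as in the context, assumed positive semidefinite. For the measurement in the σ₂ eigenbasis of the second qubit, i.e. B₀ = (1/2)(I+σ₂), B₁ = (1/2)(I−σ₂), one has p₀ = p₁ = 1/2 where p_k = Tr[(I⊗B_k)ρ(I⊗B_k)], and the conditional entropy p₀S(ρ₀) + p₁S(ρ₁), where ρ_k = (I⊗B_k)ρ(I⊗B_k)/p_k, equals S₃ = 1 + f(√(r²+c₂²)). -/
open Matrix Polynomial
open scoped Kronecker ComplexOrder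

noncomputable section

/-- 2×2 complex matrices. -/
abbrev M2 : Type := Matrix (Fin 2) (Fin 2) ℂ
/-- 4×4 complex matrices, indexed by pairs (two-qubit operators). -/
abbrev M4 : Type := Matrix (Fin 2 × Fin 2) (Fin 2 × Fin 2) ℂ

/-- Pauli matrix σ₁. -/
def σ1 : M2 := !![0, 1; 1, 0]
/-- Pauli matrix σ₂. -/
def σ2 : M2 := !![0, -Complex.I; Complex.I, 0]
/-- Pauli matrix σ₃. -/
def σ3 : M2 := !![1, 0; 0, -1]

/-- f(t) = −((1−t)/2)·log₂(1−t) − ((1+t)/2)·log₂(1+t); the convention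
0·log₂0 = 0 is automatic since `Real.logb 2 0 = 0`. -/
def f (t : ℝ) : ℝ :=
  -((1 - t) / 2) * Real.logb 2 (1 - t) - ((1 + t) / 2) * Real.logb 2 (1 + t)

/-- Von Neumann entropy (base 2): −Σ λᵢ log₂ λᵢ over the eigenvalues of `X`
(the roots of the characteristic polynomial, with multiplicity; for a PSD
Hermitian matrix these are the real nonnegative eigenvalues). -/
def entropy {n : Type} [Fintype n] [DecidableEq n] (X : Matrix n n ℂ) : ℝ :=
  -((X.charpoly.roots.map (fun z => z.re * Real.logb 2 z.re)).sum)

/-- The state ρ = (1/4)[I⊗I + r σ₃⊗I + s I⊗σ₃ + c₁ σ₁⊗σ₁ + c₂ σ₂⊗σ₂ + c₃ σ₃⊗σ₃]. -/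
def rho (r s c1 c2 c3 : ℝ) : M4 :=
  (1 / 4 : ℂ) • ((1 : M2) ⊗ₖ (1 : M2) + (r : ℂ) • (σ3 ⊗ₖ (1 : M2))
    + (s : ℂ) • ((1 : M2) ⊗ₖ σ3) + (c1 : ℂ) • (σ1 ⊗ₖ σ1)
    + (c2 : ℂ) • (σ2 ⊗ₖ σ2) + (c3 : ℂ) • (σ3 ⊗ₖ σ3))

/-- The state after the phase-flip channel:
ε_p(ρ) = (1/4)[I⊗I + r σ₃⊗I + s I⊗σ₃ + (1−p)²c₁ σ₁⊗σ₁ + (1−p)²c₂ σ₂⊗σ₂ + c₃ σ₃⊗σ₃]. -/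
def epsRho (p r s c1 c2 c3 : ℝ) : M4 :=
  rho r s ((1 - p) ^ 2 * c1) ((1 - p) ^ 2 * c2) c3

/-- Partial trace over the second qubit. -/
def ptraceB (X : M4) : M2 := Matrix.of fun i j => ∑ k : Fin 2, X (i, k) (j, k)

/-- Partial trace over the first qubit. -/
def ptraceA (X : M4) : M2 := Matrix.of fun i j => ∑ k : Fin 2, X (k, i) (k, j)

/-- (I⊗B) X (I⊗B): the (unnormalized) post-measurement operator. -/
def measOp (B : M2) (X : M4) : M4 :=
  ((1 : M2) ⊗ₖ B) * X * ((1 : M2) ⊗ₖ B)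

/-- p_k = Tr[(I⊗B) X (I⊗B)] (real part). -/
def prob (B : M2) (X : M4) : ℝ := ((measOp B X).trace).re

/-- Conditional entropy p₀ S(ρ₀) + p₁ S(ρ₁) for the projective measurement {B, I−B}
on the second qubit, with ρ_k = (I⊗B_k) X (I⊗B_k) / p_k (with the convention that
a zero-probability outcome contributes 0, since then `(p_k)⁻¹ = 0`). -/
def condEnt (X : M4) (B : M2) : ℝ :=
  prob B X * entropy (((prob B X : ℝ) : ℂ)⁻¹ • measOp B X)
    + prob (1 - B) X * entropy (((prob (1 - B) X : ℝ) : ℂ)⁻¹ • measOp (1 - B) X)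

/-- B is a rank-one orthogonal projection on ℂ². -/
def IsRankOneProj (B : M2) : Prop := B.IsHermitian ∧ B * B = B ∧ B.rank = 1

/-!
If `P` is a rank-one projection on the second qubit, then `(I ⊗ P) Y (I ⊗ P) = Y_P ⊗ P` with
`Y_P = Tr_B[(I ⊗ P) Y]`, so a measurement outcome has probability `Tr Y_P`, and, since `P` is pure,
the post-measurement state has the entropy of the normalized `Y_P`. For `ρ` and a projection whose
Bloch vector `(x, y, 0)` is a unit vector, `2 Y_P` is the qubit state with Bloch vector
`(c₁ x, c₂ y, r)`, whose eigenvalues are `(1 ± t) / 2` with `t` the length of that vector.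
Replacing `P` by `I - P` negates `x` and `y`, which leaves `t` unchanged.
-/

lemma X_pow_mul_charpoly_kronecker_vecMulVec {m n R : Type*} [Fintype m] [DecidableEq m]
    [Fintype n] [DecidableEq n] [CommRing R] (A : Matrix m m R) (v w : n → R) :
    X ^ Fintype.card m * (A ⊗ₖ vecMulVec v w).charpoly =
      X ^ Fintype.card (m × n) * ((w ⬝ᵥ v) • A).charpoly := by
  let U : Matrix (m × n) m R := of fun p j => A p.1 j * v p.2
  let V : Matrix m (m × n) R := of fun i q => (1 : Matrix m m R) i q.1 * w q.2
  have hUV : U * V = A ⊗ₖ vecMulVec v w := by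
    ext ⟨i, a⟩ ⟨j, b⟩
    simp [U, V, mul_apply, one_apply, vecMulVec_apply, mul_assoc]
  have hVU : V * U = (w ⬝ᵥ v) • A := by
    ext i j
    simp [U, V, mul_apply, one_apply, Fintype.sum_prod_type, dotProduct, Finset.mul_sum,
      mul_comm, mul_left_comm]
  rw [← hUV, ← hVU, charpoly_mul_comm']

lemma entropy_eq_of_X_pow_mul_charpoly_eq {m n : Type} [Fintype m] [DecidableEq m] [Fintype n]
    [DecidableEq n] {A : Matrix m m ℂ} {B : Matrix n n ℂ} {k l : ℕ}
    (h : X ^ k * A.charpoly = X ^ l * B.charpoly) : entropy A = entropy B := by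
  have hroots := congrArg roots h
  rw [roots_mul (mul_ne_zero (pow_ne_zero k X_ne_zero) A.charpoly_monic.ne_zero),
    roots_mul (mul_ne_zero (pow_ne_zero l X_ne_zero) B.charpoly_monic.ne_zero),
    roots_X_pow, roots_X_pow] at hroots
  have hsum := congrArg
    (fun S : Multiset ℂ => (S.map fun z => z.re * Real.logb 2 z.re).sum) hroots
  simpa [entropy, Multiset.map_nsmul, Multiset.sum_nsmul] using hsum

lemma entropy_kronecker_vecMulVec {m n : Type} [Fintype m] [DecidableEq m] [Fintype n]
    [DecidableEq n] (A : Matrix m m ℂ) {v w : n → ℂ} (hvw : w ⬝ᵥ v = 1) :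
    entropy (A ⊗ₖ vecMulVec v w) = entropy A := by
  have hcharpoly := X_pow_mul_charpoly_kronecker_vecMulVec A v w
  rw [hvw, one_smul] at hcharpoly
  exact entropy_eq_of_X_pow_mul_charpoly_eq hcharpoly

/-- The unnormalized conditional state `Tr_B[(I ⊗ P) Y]` of the first qubit given the outcome of
the effect `P` on the second qubit. -/
def condState (P : M2) : M4 →ₗ[ℂ] M2 where
  toFun Y := ptraceB (((1 : M2) ⊗ₖ P) * Y)
  map_add' Y Z := by
    ext i j
    simp [ptraceB, mul_add, Finset.sum_add_distrib]
  map_smul' a Y := by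
    ext i j
    simp [ptraceB, mul_add]

lemma condState_kronecker (P A B : M2) : condState P (A ⊗ₖ B) = (P * B).trace • A := by
  ext i j
  simp [condState, ptraceB, ← mul_kronecker_mul, trace, mul_add, mul_comm]

lemma measOp_vecMulVec (v w : Fin 2 → ℂ) (Y : M4) :
    measOp (vecMulVec v w) Y = condState (vecMulVec v w) Y ⊗ₖ vecMulVec v w := by
  ext ⟨i, a⟩ ⟨j, b⟩
  simp only [measOp, condState, LinearMap.coe_mk, AddHom.coe_mk, ptraceB, mul_apply,
    Fintype.sum_prod_type, kroneckerMap_apply, vecMulVec_apply, of_apply, one_apply, ite_mul,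
    mul_ite, one_mul, zero_mul, mul_zero, Finset.sum_ite_irrel, Finset.sum_const_zero,
    Finset.sum_ite_eq, Finset.sum_ite_eq', Finset.mem_univ, if_true, Fin.sum_univ_two]
  ring

lemma exists_eq_vecMulVec_of_det_eq_zero {K : Type*} [Field K] {M : Matrix (Fin 2) (Fin 2) K}
    (hM : M.det = 0) : ∃ v w : Fin 2 → K, M = vecMulVec v w := by
  rw [det_fin_two] at hM
  have hrow : M 0 0 ≠ 0 ∨ (M 0 0 = 0 ∧ M 1 0 = 0) ∨ (M 0 0 = 0 ∧ M 0 1 = 0) := by grind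
  rcases hrow with h00 | ⟨h00, h10⟩ | ⟨h00, h01⟩
  · have h11 : M 1 1 = M 1 0 * (M 0 1 / M 0 0) := by grind
    refine ⟨![M 0 0, M 1 0], ![1, M 0 1 / M 0 0], ?_⟩
    ext i j
    fin_cases i <;> fin_cases j <;> simp [vecMulVec_apply, h00, h11, mul_div_cancel₀]
  · refine ⟨![M 0 1, M 1 1], ![0, 1], ?_⟩
    ext i j
    fin_cases i <;> fin_cases j <;> simp [vecMulVec_apply, h00, h10]
  · refine ⟨![0, 1], ![M 1 0, M 1 1], ?_⟩
    ext i j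
    fin_cases i <;> fin_cases j <;> simp [vecMulVec_apply, h00, h01]

section RankOneTraceOne

variable {P : M2}

lemma measOp_eq_condState_kronecker (hdet : P.det = 0) (Y : M4) :
    measOp P Y = condState P Y ⊗ₖ P := by
  obtain ⟨v, w, rfl⟩ := exists_eq_vecMulVec_of_det_eq_zero hdet
  exact measOp_vecMulVec v w Y

lemma prob_eq_re_trace_condState (hdet : P.det = 0) (htr : P.trace = 1) (Y : M4) :
    prob P Y = (condState P Y).trace.re := by
  rw [prob, measOp_eq_condState_kronecker hdet, trace_kronecker, htr, mul_one]

lemma entropy_smul_measOp (hdet : P.det = 0) (htr : P.trace = 1) (c : ℂ) (Y : M4) :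
    entropy (c • measOp P Y) = entropy (c • condState P Y) := by
  obtain ⟨v, w, rfl⟩ := exists_eq_vecMulVec_of_det_eq_zero hdet
  rw [measOp_vecMulVec, ← smul_kronecker]
  exact entropy_kronecker_vecMulVec _ (by rw [dotProduct_comm, ← trace_vecMulVec, htr])

end RankOneTraceOne

lemma div_two_mul_logb_two_div_two (a : ℝ) :
    a / 2 * Real.logb 2 (a / 2) = a / 2 * Real.logb 2 a - a / 2 := by
  rcases eq_or_ne a 0 with rfl | ha
  · simp
  · rw [Real.logb_div ha two_ne_zero, Real.logb_self_eq_one one_lt_two]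
    ring

/-- The trace-one Hermitian matrix `(I + x σ₁ + y σ₂ + z σ₃) / 2` with Bloch vector `(x, y, z)`:
a qubit state inside the unit ball, a rank-one projection on the unit sphere. -/
def bloch (x y z : ℝ) : M2 :=
  (1 / 2 : ℂ) • (1 + (x : ℂ) • σ1 + (y : ℂ) • σ2 + (z : ℂ) • σ3)

section Bloch

variable (x y z : ℝ)

lemma one_sub_bloch : 1 - bloch x y z = bloch (-x) (-y) (-z) := by
  simp only [bloch, Complex.ofReal_neg]
  module

lemma bloch_eq_of :
    bloch x y z =
      !![(1 + z : ℂ) / 2, (x - y * Complex.I) / 2; (x + y * Complex.I) / 2, (1 - z) / 2] := by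
  ext i j
  fin_cases i <;> fin_cases j <;> simp [bloch, σ1, σ2, σ3] <;> ring

lemma trace_bloch : (bloch x y z).trace = 1 := by
  rw [bloch_eq_of, trace_fin_two_of]
  ring

lemma trace_bloch_mul_σ1 : (bloch x y z * σ1).trace = x := by
  rw [bloch_eq_of, σ1, mul_fin_two, trace_fin_two_of]
  ring

lemma trace_bloch_mul_σ2 : (bloch x y z * σ2).trace = y := by
  rw [bloch_eq_of, σ2, mul_fin_two, trace_fin_two_of]
  linear_combination (-y : ℂ) * Complex.I_sq

lemma trace_bloch_mul_σ3 : (bloch x y z * σ3).trace = z := by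
  rw [bloch_eq_of, σ3, mul_fin_two, trace_fin_two_of]
  ring

lemma det_bloch : (bloch x y z).det = ((1 - (x ^ 2 + y ^ 2 + z ^ 2)) / 4 : ℝ) := by
  rw [bloch_eq_of, det_fin_two_of]
  push_cast
  linear_combination (y : ℂ) ^ 2 / 4 * Complex.I_sq

lemma roots_charpoly_bloch :
    (bloch x y z).charpoly.roots =
      {(((1 + √(x ^ 2 + y ^ 2 + z ^ 2)) / 2 : ℝ) : ℂ),
        (((1 - √(x ^ 2 + y ^ 2 + z ^ 2)) / 2 : ℝ) : ℂ)} := by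
  have hsq : √(x ^ 2 + y ^ 2 + z ^ 2) ^ 2 = x ^ 2 + y ^ 2 + z ^ 2 := Real.sq_sqrt (by positivity)
  set t := √(x ^ 2 + y ^ 2 + z ^ 2)
  have htrace : (bloch x y z).trace = ((1 + t) / 2 : ℝ) + ((1 - t) / 2 : ℝ) := by
    rw [trace_bloch]
    push_cast
    ring
  have hdet : (bloch x y z).det = ((1 + t) / 2 : ℝ) * ((1 - t) / 2 : ℝ) := by
    rw [det_bloch, ← hsq]
    push_cast
    ring
  have hfactor : (bloch x y z).charpoly =
      (X - C (((1 + t) / 2 : ℝ) : ℂ)) * (X - C (((1 - t) / 2 : ℝ) : ℂ)) := by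
    rw [charpoly_fin_two, htrace, hdet, C_add, C_mul]
    ring
  rw [hfactor, roots_mul (mul_ne_zero (X_sub_C_ne_zero _) (X_sub_C_ne_zero _)),
    roots_X_sub_C, roots_X_sub_C]
  rfl

lemma entropy_bloch : entropy (bloch x y z) = 1 + f √(x ^ 2 + y ^ 2 + z ^ 2) := by
  simp only [entropy, roots_charpoly_bloch, Multiset.insert_eq_cons, Multiset.map_cons,
    Multiset.map_singleton, Multiset.sum_cons, Multiset.sum_singleton, Complex.ofReal_re,
    div_two_mul_logb_two_div_two, f]
  ring

end Bloch

lemma condState_rho (P : M2) (r s c1 c2 c3 : ℝ) :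
    condState P (rho r s c1 c2 c3) =
      (1 / 4 : ℂ) • ((P.trace + s * (P * σ3).trace) • (1 : M2) + (c1 * (P * σ1).trace) • σ1
        + (c2 * (P * σ2).trace) • σ2 + (r * P.trace + c3 * (P * σ3).trace) • σ3) := by
  simp only [rho, map_smul, map_add, condState_kronecker, mul_one]
  module

section Equator

variable {r s c1 c2 c3 x y : ℝ}

lemma condState_bloch_zero_rho :
    condState (bloch x y 0) (rho r s c1 c2 c3) = (1 / 2 : ℂ) • bloch (c1 * x) (c2 * y) r := by
  rw [condState_rho, trace_bloch, trace_bloch_mul_σ1, trace_bloch_mul_σ2, trace_bloch_mul_σ3]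
  simp only [bloch, Complex.ofReal_mul, Complex.ofReal_zero]
  module

lemma det_bloch_zero_eq_zero (h : x ^ 2 + y ^ 2 = 1) : (bloch x y 0).det = 0 := by
  simp [det_bloch, h]

lemma prob_bloch_zero_rho (h : x ^ 2 + y ^ 2 = 1) :
    prob (bloch x y 0) (rho r s c1 c2 c3) = 1 / 2 := by
  rw [prob_eq_re_trace_condState (det_bloch_zero_eq_zero h) (trace_bloch x y 0),
    condState_bloch_zero_rho, trace_smul, trace_bloch]
  norm_num

lemma entropy_inv_prob_smul_measOp_bloch_zero_rho (h : x ^ 2 + y ^ 2 = 1) :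
    entropy ((prob (bloch x y 0) (rho r s c1 c2 c3) : ℂ)⁻¹ •
        measOp (bloch x y 0) (rho r s c1 c2 c3)) =
      1 + f √(r ^ 2 + (c1 * x) ^ 2 + (c2 * y) ^ 2) := by
  have hscale : (((1 / 2 : ℝ) : ℂ)⁻¹ * (1 / 2)) = 1 := by norm_num
  have hlength : (c1 * x) ^ 2 + (c2 * y) ^ 2 + r ^ 2 = r ^ 2 + (c1 * x) ^ 2 + (c2 * y) ^ 2 := by
    ring
  rw [entropy_smul_measOp (det_bloch_zero_eq_zero h) (trace_bloch x y 0), prob_bloch_zero_rho h,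
    condState_bloch_zero_rho, smul_smul, hscale, one_smul, entropy_bloch, hlength]

end Equator

theorem stmt3_general (r s c1 c2 c3 : ℝ) {x y : ℝ} (h : x ^ 2 + y ^ 2 = 1) :
    prob (bloch x y 0) (rho r s c1 c2 c3) = 1 / 2 ∧
    prob (1 - bloch x y 0) (rho r s c1 c2 c3) = 1 / 2 ∧
    condEnt (rho r s c1 c2 c3) (bloch x y 0) =
      1 + f √(r ^ 2 + (c1 * x) ^ 2 + (c2 * y) ^ 2) := by
  have hneg : (-x) ^ 2 + (-y) ^ 2 = 1 := by rwa [neg_sq, neg_sq]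
  have hcompl : 1 - bloch x y 0 = bloch (-x) (-y) 0 := by rw [one_sub_bloch, neg_zero]
  rw [condEnt, hcompl, entropy_inv_prob_smul_measOp_bloch_zero_rho h,
    entropy_inv_prob_smul_measOp_bloch_zero_rho hneg, prob_bloch_zero_rho h,
    prob_bloch_zero_rho hneg, mul_neg, mul_neg, neg_sq, neg_sq]
  exact ⟨rfl, rfl, by ring⟩

/-- for the σ₂-eigenbasis measurement B₀ = (1/2)(I+σ₂), B₁ = (1/2)(I−σ₂)
on the second qubit, p₀ = p₁ = 1/2 and the conditional entropy is S₃ = 1 + f(√(r²+c₂²)). -/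
theorem stmt3 (r s c1 c2 c3 : ℝ) (hρ : (rho r s c1 c2 c3).PosSemidef) :
    prob ((1 / 2 : ℂ) • (1 + σ2)) (rho r s c1 c2 c3) = 1 / 2 ∧
    prob (1 - (1 / 2 : ℂ) • (1 + σ2)) (rho r s c1 c2 c3) = 1 / 2 ∧
    condEnt (rho r s c1 c2 c3) ((1 / 2 : ℂ) • (1 + σ2)) =
      1 + f (Real.sqrt (r ^ 2 + c2 ^ 2)) := by
  have hproj : (1 / 2 : ℂ) • (1 + σ2) = bloch 0 1 0 := by simp [bloch]
  rw [hproj]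
  simpa using stmt3_general r s c1 c2 c3 (x := 0) (y := 1) (by simp)
end
end

section
/- Let r, c₁, c₃ be real numbers and 0 ≤ p ≤ 1, and let ε_p(ρ) be as in the context with s = c₃·r and c₂ = −c₃·c₁. Then the multiset of eigenvalues of ε_p(ρ) (with multiplicity) is exactly {u₊, u₋, v₊, v₋}, where u± = ((1−c₃)/4)(1 ± √(r² + (1−p)⁴c₁²)) and v± = ((1+c₃)/4)(1 ± √(r² + (1−p)⁴c₁²)). -/
open Matrix Polynomial
open scoped Kronecker ComplexOrder

noncomputable section

/-!
Conjugation by the controlled-NOT permutation of the computational basis fixes `σ₃ ⊗ I` and maps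
`I ⊗ σ₃` to `σ₃ ⊗ σ₃`, `σ₁ ⊗ σ₁` to `σ₁ ⊗ I`, `σ₂ ⊗ σ₂` to `-σ₁ ⊗ σ₃` and `σ₃ ⊗ σ₃` to `I ⊗ σ₃`.
Only the diagonal operators `I` and `σ₃` are left on the second qubit, so `ρ` becomes the direct sum
of two `2 × 2` operators of the form `w I + x σ₁ + z σ₃`, whose eigenvalues are `w ± √(x² + z²)`.
For `s = c₃ r` and `c₂ = -c₃ c₁`, relations that the channel preserves since it rescales `c₁` and
`c₂` by the same factor, these operators are `(1 + c₃) / 4` and `(1 - c₃) / 4` times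
`I + c₁ σ₁ + r σ₃`.
-/

section Charpoly

variable {R m o : Type*} [CommRing R] [Fintype m] [DecidableEq m] [Fintype o] [DecidableEq o]

theorem charmatrix_blockDiagonal (M : o → Matrix m m R) :
    charmatrix (blockDiagonal M) = blockDiagonal fun k => charmatrix (M k) := by
  ext ⟨i, k⟩ ⟨j, l⟩ : 2
  by_cases hkl : k = l <;> by_cases hij : i = j <;> simp [blockDiagonal_apply, hkl, hij]

theorem charpoly_blockDiagonal (M : o → Matrix m m R) :
    (blockDiagonal M).charpoly = ∏ k, (M k).charpoly := by
  simp only [charpoly, charmatrix_blockDiagonal, det_blockDiagonal]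

theorem roots_charpoly_fin_two_of_trace_eq_of_det_eq [IsDomain R] {A : Matrix (Fin 2) (Fin 2) R}
    {x y : R} (htrace : A.trace = x + y) (hdet : A.det = x * y) : A.charpoly.roots = {x, y} := by
  have hfactor : A.charpoly = (X - C x) * (X - C y) := by
    rw [charpoly_fin_two, htrace, hdet, C_add, C_mul]
    ring
  rw [hfactor, roots_mul (mul_ne_zero (X_sub_C_ne_zero x) (X_sub_C_ne_zero y)), roots_X_sub_C,
    roots_X_sub_C, Multiset.singleton_add, Multiset.insert_eq_cons]

end Charpoly

/-- The operator `w I + x σ₁ + z σ₃`. Up to reordering the basis, the states `rho` are direct sums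
of two of these. -/
def pauliXZ (w x z : ℂ) : M2 := w • (1 : M2) + x • σ1 + z • σ3

theorem pauliXZ_eq (w x z : ℂ) : pauliXZ w x z = !![w + z, x; x, w - z] := by
  ext i j
  fin_cases i <;> fin_cases j <;> simp [pauliXZ, σ1, σ3, sub_eq_add_neg]

theorem pauliXZ_add (w x z w' x' z' : ℂ) :
    pauliXZ w x z + pauliXZ w' x' z' = pauliXZ (w + w') (x + x') (z + z') := by
  simp only [pauliXZ]
  module

theorem pauliXZ_sub (w x z w' x' z' : ℂ) :
    pauliXZ w x z - pauliXZ w' x' z' = pauliXZ (w - w') (x - x') (z - z') := by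
  simp only [pauliXZ]
  module

theorem roots_charpoly_pauliXZ (w : ℂ) {x z q : ℂ} (hq : q ^ 2 = x ^ 2 + z ^ 2) :
    (pauliXZ w x z).charpoly.roots = {w + q, w - q} := by
  rw [pauliXZ_eq]
  apply roots_charpoly_fin_two_of_trace_eq_of_det_eq
  · rw [trace_fin_two_of]
    ring
  · rw [det_fin_two_of]
    linear_combination hq

theorem kronecker_one_add_kronecker_σ3 {m n : Type*} (A B : Matrix m n ℂ) :
    A ⊗ₖ (1 : M2) + B ⊗ₖ σ3 = blockDiagonal ![A + B, A - B] := by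
  ext ⟨i, k⟩ ⟨j, l⟩
  fin_cases k <;> fin_cases l <;> simp [σ3, blockDiagonal_apply, sub_eq_add_neg]

/-- The controlled-NOT permutation `(i, j) ↦ (i, i + j)` of the computational basis, controlled by
the first qubit. It is used to bring `rho` to block-diagonal form. -/
def cnot : Fin 2 × Fin 2 ≃ Fin 2 × Fin 2 := (Equiv.refl (Fin 2)).prodShear Equiv.addLeft

theorem reindex_cnot_σ3_kronecker_one :
    reindex cnot cnot (σ3 ⊗ₖ (1 : M2)) = σ3 ⊗ₖ (1 : M2) := by
  ext ⟨i, k⟩ ⟨j, l⟩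
  fin_cases i <;> fin_cases k <;> fin_cases j <;> fin_cases l <;> simp [cnot, σ3]

theorem reindex_cnot_one_kronecker_σ3 :
    reindex cnot cnot ((1 : M2) ⊗ₖ σ3) = σ3 ⊗ₖ σ3 := by
  ext ⟨i, k⟩ ⟨j, l⟩
  fin_cases i <;> fin_cases k <;> fin_cases j <;> fin_cases l <;> simp [cnot, σ3]

theorem reindex_cnot_σ1_kronecker_σ1 :
    reindex cnot cnot (σ1 ⊗ₖ σ1) = σ1 ⊗ₖ (1 : M2) := by
  ext ⟨i, k⟩ ⟨j, l⟩
  fin_cases i <;> fin_cases k <;> fin_cases j <;> fin_cases l <;> simp [cnot, σ1]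

theorem reindex_cnot_σ2_kronecker_σ2 :
    reindex cnot cnot (σ2 ⊗ₖ σ2) = -(σ1 ⊗ₖ σ3) := by
  ext ⟨i, k⟩ ⟨j, l⟩
  fin_cases i <;> fin_cases k <;> fin_cases j <;> fin_cases l <;> simp [cnot, σ1, σ2, σ3]

theorem reindex_cnot_σ3_kronecker_σ3 :
    reindex cnot cnot (σ3 ⊗ₖ σ3) = (1 : M2) ⊗ₖ σ3 := by
  ext ⟨i, k⟩ ⟨j, l⟩
  fin_cases i <;> fin_cases k <;> fin_cases j <;> fin_cases l <;> simp [cnot, σ3]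

theorem reindex_cnot_rho (r s c1 c2 c3 : ℝ) :
    reindex cnot cnot (rho r s c1 c2 c3) =
      pauliXZ (1 / 4) (c1 / 4) (r / 4) ⊗ₖ (1 : M2) + pauliXZ (c3 / 4) (-c2 / 4) (s / 4) ⊗ₖ σ3 := by
  have hlinear : reindex cnot cnot (rho r s c1 c2 c3) =
      (1 / 4 : ℂ) • (reindex cnot cnot ((1 : M2) ⊗ₖ (1 : M2))
        + (r : ℂ) • reindex cnot cnot (σ3 ⊗ₖ (1 : M2))
        + (s : ℂ) • reindex cnot cnot ((1 : M2) ⊗ₖ σ3)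
        + (c1 : ℂ) • reindex cnot cnot (σ1 ⊗ₖ σ1)
        + (c2 : ℂ) • reindex cnot cnot (σ2 ⊗ₖ σ2)
        + (c3 : ℂ) • reindex cnot cnot (σ3 ⊗ₖ σ3)) := rfl
  have hone : reindex cnot cnot ((1 : M2) ⊗ₖ (1 : M2)) = (1 : M2) ⊗ₖ (1 : M2) := by
    rw [one_kronecker_one, reindex_apply, submatrix_one_equiv]
  rw [hlinear, hone, reindex_cnot_σ3_kronecker_one, reindex_cnot_one_kronecker_σ3,
    reindex_cnot_σ1_kronecker_σ1, reindex_cnot_σ2_kronecker_σ2, reindex_cnot_σ3_kronecker_σ3]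
  simp only [pauliXZ, add_kronecker, smul_kronecker]
  module

theorem charpoly_rho (r s c1 c2 c3 : ℝ) :
    (rho r s c1 c2 c3).charpoly =
      (pauliXZ ((1 - c3) / 4) ((c1 + c2) / 4) ((r - s) / 4)).charpoly *
        (pauliXZ ((1 + c3) / 4) ((c1 - c2) / 4) ((r + s) / 4)).charpoly := by
  rw [← charpoly_reindex cnot, reindex_cnot_rho, kronecker_one_add_kronecker_σ3,
    charpoly_blockDiagonal, Fin.prod_univ_two, cons_val_zero, cons_val_one, cons_val_zero, mul_comm,
    pauliXZ_add, pauliXZ_sub]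
  ring_nf

-- `u` and `v` are square roots of unspecified sign, which accommodates `(1 ± c₃) * √…` without
-- a case distinction on the sign of `1 ± c₃`.
theorem stmt9_general (r s c1 c2 c3 : ℝ) {u v : ℂ}
    (hu : u ^ 2 = (r - s) ^ 2 + (c1 + c2) ^ 2) (hv : v ^ 2 = (r + s) ^ 2 + (c1 - c2) ^ 2) :
    (rho r s c1 c2 c3).charpoly.roots =
      {(1 - c3) / 4 + u / 4, (1 - c3) / 4 - u / 4, (1 + c3) / 4 + v / 4, (1 + c3) / 4 - v / 4} := by
  rw [charpoly_rho, roots_mul ((charpoly_monic _).mul (charpoly_monic _)).ne_zero,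
    roots_charpoly_pauliXZ (q := u / 4) _ (by linear_combination hu / 16),
    roots_charpoly_pauliXZ (q := v / 4) _ (by linear_combination hv / 16)]
  rfl

/-- with s = c₃r and c₂ = −c₃c₁, the eigenvalues of ε_p(ρ) are
u± = ((1−c₃)/4)(1 ± √(r² + (1−p)⁴c₁²)) and v± = ((1+c₃)/4)(1 ± √(r² + (1−p)⁴c₁²)). -/
theorem stmt9 (r c1 c3 p : ℝ) (hp0 : 0 ≤ p) (hp1 : p ≤ 1) :
    (epsRho p r (c3 * r) c1 (-(c3 * c1)) c3).charpoly.roots =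
      {(((1 - c3) / 4 * (1 + Real.sqrt (r ^ 2 + (1 - p) ^ 4 * c1 ^ 2)) : ℝ) : ℂ),
       (((1 - c3) / 4 * (1 - Real.sqrt (r ^ 2 + (1 - p) ^ 4 * c1 ^ 2)) : ℝ) : ℂ),
       (((1 + c3) / 4 * (1 + Real.sqrt (r ^ 2 + (1 - p) ^ 4 * c1 ^ 2)) : ℝ) : ℂ),
       (((1 + c3) / 4 * (1 - Real.sqrt (r ^ 2 + (1 - p) ^ 4 * c1 ^ 2)) : ℝ) : ℂ)} := by
  have hq : (√(r ^ 2 + (1 - p) ^ 4 * c1 ^ 2) : ℂ) ^ 2 = r ^ 2 + (1 - p) ^ 4 * c1 ^ 2 := by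
    exact_mod_cast Real.sq_sqrt (by positivity : 0 ≤ r ^ 2 + (1 - p) ^ 4 * c1 ^ 2)
  set q := √(r ^ 2 + (1 - p) ^ 4 * c1 ^ 2)
  rw [epsRho, stmt9_general (u := (1 - c3) * q) (v := (1 + c3) * q)] <;> push_cast
  · ring_nf
  · linear_combination (1 - c3 : ℂ) ^ 2 * hq
  · linear_combination (1 + c3 : ℂ) ^ 2 * hq
end
end

section
/- Let r, c₁, c₂ be real numbers with c₂² ≤ c₁² and r² + c₁² ≤ 1. Then for every m ∈ [0, 1/4], f(√(r² + c₁² − 4m(c₁² − c₂²))) ≥ min{ f(√(r² + c₁²)), f(√(r² + c₂²)) }; in other words, the minimum of m ↦ f(√(r² + c₁² − 4m(c₁² − c₂²))) over [0,1/4] is attained at an endpoint m = 0 or m = 1/4. -/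
open Matrix Polynomial
open scoped Kronecker ComplexOrder

noncomputable section

/-!
Up to an affine rescaling, `f t` is the binary entropy of `(1 + t) / 2`, which decreases once the
probability exceeds `1 / 2`. Hence `x ↦ f √x` is antitone up to `1`, and the radicand decreases in
`m`: the minimum is always attained at `m = 0`.
-/

theorem negMulLog_div (x y : ℝ) :
    Real.negMulLog (x / y) = (Real.negMulLog x + x * Real.log y) / y := by
  rw [div_eq_mul_inv, Real.negMulLog_mul, Real.negMulLog, Real.negMulLog, Real.log_inv]
  ring

theorem f_eq_binEntropy_div_log_two_sub_one (t : ℝ) :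
    f t = Real.binEntropy ((1 + t) / 2) / Real.log 2 - 1 := by
  have one_sub_half : 1 - (1 + t) / 2 = (1 - t) / 2 := by ring
  have log_two_ne_zero : Real.log 2 ≠ 0 := (Real.log_pos one_lt_two).ne'
  rw [Real.binEntropy_eq_negMulLog_add_negMulLog_one_sub, one_sub_half, negMulLog_div,
    negMulLog_div]
  unfold f Real.negMulLog Real.logb
  field_simp [log_two_ne_zero]
  ring

theorem f_strictAntiOn : StrictAntiOn f (Set.Icc 0 1) := by
  intro s hs t ht hst
  have binEntropy_lt : Real.binEntropy ((1 + t) / 2) < Real.binEntropy ((1 + s) / 2) :=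
    Real.binEntropy_strictAntiOn ⟨by linarith [hs.1], by linarith [hs.2]⟩
      ⟨by linarith [ht.1], by linarith [ht.2]⟩ (by linarith)
  rw [f_eq_binEntropy_div_log_two_sub_one, f_eq_binEntropy_div_log_two_sub_one]
  exact sub_lt_sub_right (div_lt_div_of_pos_right binEntropy_lt (Real.log_pos one_lt_two)) 1

-- The set is not cut off at `0` because `√x = 0` for negative `x`.
theorem f_comp_sqrt_antitoneOn : AntitoneOn (fun x => f (√x)) (Set.Iic 1) :=
  fun _ hx _ hy hxy =>
    f_strictAntiOn.antitoneOn ⟨Real.sqrt_nonneg _, Real.sqrt_le_one.mpr hx⟩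
      ⟨Real.sqrt_nonneg _, Real.sqrt_le_one.mpr hy⟩ (Real.sqrt_le_sqrt hxy)

theorem stmt17_general (r c1 c2 : ℝ) (hc : c2 ^ 2 ≤ c1 ^ 2) (hrc : r ^ 2 + c1 ^ 2 ≤ 1) :
    MonotoneOn (fun m => f (√(r ^ 2 + c1 ^ 2 - 4 * m * (c1 ^ 2 - c2 ^ 2)))) (Set.Ici 0) := by
  have radicand_antitone :
      Antitone fun m : ℝ => r ^ 2 + c1 ^ 2 - 4 * m * (c1 ^ 2 - c2 ^ 2) := fun _ _ hmn =>
    sub_le_sub_left (mul_le_mul_of_nonneg_right (by linarith) (sub_nonneg.mpr hc)) _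
  have radicand_le_one :
      Set.MapsTo (fun m : ℝ => r ^ 2 + c1 ^ 2 - 4 * m * (c1 ^ 2 - c2 ^ 2))
        (Set.Ici 0) (Set.Iic 1) := fun _ hm =>
    (radicand_antitone hm).trans (by simpa using hrc)
  exact f_comp_sqrt_antitoneOn.comp (radicand_antitone.antitoneOn _) radicand_le_one

/-- the minimum of m ↦ f(√(r² + c₁² − 4m(c₁² − c₂²))) over [0, 1/4]
is attained at an endpoint. -/
theorem stmt17 (r c1 c2 : ℝ) (hc : c2 ^ 2 ≤ c1 ^ 2) (hrc : r ^ 2 + c1 ^ 2 ≤ 1)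
    (m : ℝ) (hm0 : 0 ≤ m) (hm1 : m ≤ 1 / 4) :
    min (f (Real.sqrt (r ^ 2 + c1 ^ 2))) (f (Real.sqrt (r ^ 2 + c2 ^ 2))) ≤
      f (Real.sqrt (r ^ 2 + c1 ^ 2 - 4 * m * (c1 ^ 2 - c2 ^ 2))) := by
  have h := stmt17_general r c1 c2 hc hrc Set.self_mem_Ici hm0 hm0
  exact (min_le_left _ _).trans (by simpa using h)
end
end
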